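/- Let A be a finite abelian group (written additively), let a ∈ A, let n be the additive order of a, and let Λ_{a/A} = (A × ℝ)/⟨(a,1)⟩. Then: (i) the assignment A × ℝ → Λ_{a/A}, (x,t) ↦ ⟦(x, n·t)⟧ satisfies ⟦(x, n·(t+1))⟧ = ⟦(x, n·t)⟧ for all x ∈ A and t ∈ ℝ, and hence descends to a well-defined homomorphism q : A × (ℝ/ℤ) → Λ_{a/A} with q(x, t + ℤ) = ⟦(x, n·t)⟧; (ii) q is surjective; (iii) the kernel of q is the cyclic subgroup of A × (ℝ/ℤ) generated by the element (a, (1/n) + ℤ); and (iv) this element (a, (1/n) + ℤ) has additive order exactly n. In other words, Λ_{a/A} sits in a short exact sequence 0 → ℤ/n → A × (ℝ/ℤ) → Λ_{a/A} → 0. -/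

import Mathlib

/-!
Let `n` kill `a`. Since `n • (a, b) = (0, n • b)`, the map `(x, t) ↦ (x, n • t)` descends to
`A × B ⧸ ⟨b⟩ → (A × B) ⧸ ⟨(a, b)⟩`. If multiplication by `n` is bijective on `B` and `n • c = b`,
then `(x, t) ↦ (x, n • t)` is an automorphism of `A × B` taking `(a, c)` to `(a, b)`, so the
descended map is onto and its kernel is generated by the class of `(a, c)`. For the circle,
`B = ℝ`, `b = 1` and `c = 1 / n`.
-/

theorem nsmul_bijective_of_ne_zero {K : Type*} [DivisionSemiring K] [CharZero K] {n : ℕ}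
    (hn : n ≠ 0) : Function.Bijective fun t : K ↦ n • t := by
  simpa only [nsmul_eq_mul] using mulLeft_bijective₀ (n : K) (Nat.cast_ne_zero.mpr hn)

theorem nsmul_one_div_natCast {K : Type*} [DivisionSemiring K] [CharZero K] {n : ℕ}
    (hn : n ≠ 0) : n • (1 / n : K) = 1 := by
  rw [nsmul_eq_mul, mul_one_div_cancel (Nat.cast_ne_zero.mpr hn)]

/-- The quotient `(A × B) ⧸ ⟨(a, b)⟩`. The Ganter–Rezk–Huan group `Λ_{a/A}` is the case `B = ℝ`,
`b = 1`. -/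
abbrev GanterRezkHuan {A B : Type*} [AddCommGroup A] [AddCommGroup B] (a : A) (b : B) : Type _ :=
  (A × B) ⧸ AddSubgroup.zmultiples (a, b)

namespace GanterRezkHuan

variable {A B : Type*} [AddCommGroup A] [AddCommGroup B] {a : A} {b c : B} {n : ℕ}

theorem mk_zero_nsmul (b : B) (ha : n • a = 0) :
    (QuotientAddGroup.mk (0, n • b) : GanterRezkHuan a b) = 0 := by
  rw [QuotientAddGroup.eq_zero_iff, ← ha, ← Prod.smul_mk]
  exact AddSubgroup.nsmul_mem_zmultiples (a, b) n

theorem mk_nsmul_add (b : B) (ha : n • a = 0) (x : A) (t : B) :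
    (QuotientAddGroup.mk (x, n • (t + b)) : GanterRezkHuan a b) =
      QuotientAddGroup.mk (x, n • t) := by
  have hsplit : (x, n • (t + b)) = (x, n • t) + (0, n • b) := by
    rw [Prod.mk_add_mk, add_zero, nsmul_add]
  rw [hsplit, QuotientAddGroup.mk_add, mk_zero_nsmul b ha, add_zero]

/-- The homomorphism `(x, t + ⟨b⟩) ↦ ⟦(x, n • t)⟧` for any `n` that kills `a`. It presents
`GanterRezkHuan a b` as a quotient of `A × B ⧸ ⟨b⟩` when `B` is `n`-divisible. -/
def cover (b : B) (ha : n • a = 0) :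
    A × (B ⧸ AddSubgroup.zmultiples b) →+ GanterRezkHuan a b :=
  ((QuotientAddGroup.mk' _).comp (AddMonoidHom.inl A B)).coprod
    (QuotientAddGroup.lift (AddSubgroup.zmultiples b)
      ((QuotientAddGroup.mk' _).comp ((AddMonoidHom.inr A B).comp (nsmulAddMonoidHom n)))
      (AddSubgroup.zmultiples_le.mpr (mk_zero_nsmul b ha)))

theorem cover_mk (b : B) (ha : n • a = 0) (x : A) (t : B) :
    cover b ha (x, QuotientAddGroup.mk t) = QuotientAddGroup.mk (x, n • t) := by
  change (QuotientAddGroup.mk (x, 0) + QuotientAddGroup.mk (0, n • t) : GanterRezkHuan a b) = _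
  rw [← QuotientAddGroup.mk_add, Prod.mk_add_mk, add_zero, zero_add]

theorem cover_surjective (b : B) (ha : n • a = 0)
    (hn : Function.Surjective fun t : B ↦ n • t) : Function.Surjective (cover b ha) := by
  intro y
  obtain ⟨⟨x, s⟩, rfl⟩ := QuotientAddGroup.mk_surjective y
  obtain ⟨t, rfl⟩ := hn s
  exact ⟨(x, QuotientAddGroup.mk t), cover_mk b ha x t⟩

theorem ker_cover (ha : n • a = 0) (hn : Function.Injective fun t : B ↦ n • t)
    (hc : n • c = b) :
    (cover b ha).ker = AddSubgroup.zmultiples (a, QuotientAddGroup.mk c) := by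
  apply le_antisymm
  · rintro ⟨x, s⟩ hs
    obtain ⟨t, rfl⟩ := QuotientAddGroup.mk_surjective s
    rw [AddMonoidHom.mem_ker, cover_mk, QuotientAddGroup.eq_zero_iff] at hs
    obtain ⟨k, hk⟩ := AddSubgroup.mem_zmultiples_iff.mp hs
    obtain ⟨rfl, hkt⟩ : k • a = x ∧ k • b = n • t := Prod.ext_iff.mp hk
    obtain rfl : k • c = t := hn <| by
      calc n • k • c = k • n • c := smul_comm n k c
        _ = n • t := by rw [hc, hkt]
    exact AddSubgroup.zsmul_mem_zmultiples (a, (c : B ⧸ AddSubgroup.zmultiples b)) k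
  · rw [AddSubgroup.zmultiples_le, AddMonoidHom.mem_ker, cover_mk, hc,
      QuotientAddGroup.eq_zero_iff]
    exact AddSubgroup.mem_zmultiples (a, b)

theorem addOrderOf_prodMk_mk (hc : addOrderOf a • c = b) :
    addOrderOf (a, (c : B ⧸ AddSubgroup.zmultiples b)) = addOrderOf a := by
  have hkill : addOrderOf a • (c : B ⧸ AddSubgroup.zmultiples b) = 0 := by
    rw [← QuotientAddGroup.mk_nsmul, hc, QuotientAddGroup.eq_zero_iff]
    exact AddSubgroup.mem_zmultiples b
  rw [Prod.addOrderOf]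
  exact Nat.lcm_eq_left (addOrderOf_dvd_of_nsmul_eq_zero hkill)

end GanterRezkHuan

theorem stmt_2_general {A B : Type*} [AddCommGroup A] [AddCommGroup B] (a : A) {b c : B}
    (hn : Function.Bijective fun t : B ↦ addOrderOf a • t) (hc : addOrderOf a • c = b) :
    (∀ (x : A) (t : B),
      (QuotientAddGroup.mk (x, addOrderOf a • (t + b)) : GanterRezkHuan a b) =
        QuotientAddGroup.mk (x, addOrderOf a • t)) ∧
    ∃ q : A × (B ⧸ AddSubgroup.zmultiples b) →+ GanterRezkHuan a b,
      (∀ (x : A) (t : B),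
        q (x, QuotientAddGroup.mk t) = QuotientAddGroup.mk (x, addOrderOf a • t)) ∧
      Function.Surjective q ∧
      q.ker = AddSubgroup.zmultiples (a, QuotientAddGroup.mk c) ∧
      addOrderOf (a, (c : B ⧸ AddSubgroup.zmultiples b)) = addOrderOf a :=
  have ha : addOrderOf a • a = 0 := addOrderOf_nsmul_eq_zero a
  ⟨GanterRezkHuan.mk_nsmul_add b ha, GanterRezkHuan.cover b ha, GanterRezkHuan.cover_mk b ha,
    GanterRezkHuan.cover_surjective b ha hn.surjective,
    GanterRezkHuan.ker_cover ha hn.injective hc, GanterRezkHuan.addOrderOf_prodMk_mk hc⟩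

/-- For a finite abelian group `A`, `a ∈ A` of additive order `n`, and
`Λ_{a/A} = (A × ℝ)/⟨(a,1)⟩`: (i) `⟦(x, n·(t+1))⟧ = ⟦(x, n·t)⟧`, so `(x, t + ℤ) ↦ ⟦(x, n·t)⟧`
descends to a well-defined homomorphism `q : A × (ℝ/ℤ) → Λ_{a/A}`; (ii) `q` is surjective;
(iii) the kernel of `q` is the cyclic subgroup generated by `(a, 1/n + ℤ)`; and (iv) this
element has additive order exactly `n`. That is, `0 → ℤ/n → A × (ℝ/ℤ) → Λ_{a/A} → 0` is
short exact. -/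
theorem stmt_2 {A : Type} [AddCommGroup A] [Fintype A] (a : A) :
    (∀ (x : A) (t : ℝ),
      (QuotientAddGroup.mk (x, (addOrderOf a : ℝ) * (t + 1)) :
        (A × ℝ) ⧸ AddSubgroup.zmultiples ((a, (1 : ℝ)) : A × ℝ)) =
      QuotientAddGroup.mk (x, (addOrderOf a : ℝ) * t)) ∧
    ∃ q : (A × AddCircle (1 : ℝ)) →+
        (A × ℝ) ⧸ AddSubgroup.zmultiples ((a, (1 : ℝ)) : A × ℝ),
      (∀ (x : A) (t : ℝ), q (x, (t : AddCircle (1 : ℝ))) =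
        QuotientAddGroup.mk (x, (addOrderOf a : ℝ) * t)) ∧
      Function.Surjective q ∧
      q.ker = AddSubgroup.zmultiples
        ((a, ((1 / (addOrderOf a : ℝ) : ℝ) : AddCircle (1 : ℝ))) : A × AddCircle (1 : ℝ)) ∧
      addOrderOf ((a, ((1 / (addOrderOf a : ℝ) : ℝ) : AddCircle (1 : ℝ))) :
        A × AddCircle (1 : ℝ)) = addOrderOf a := by
  have hn : addOrderOf a ≠ 0 := (addOrderOf_pos a).ne'
  simpa only [nsmul_eq_mul] using
    stmt_2_general a (nsmul_bijective_of_ne_zero (K := ℝ) hn) (nsmul_one_div_natCast hn)
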